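/- Transience of ℤ³ in flow form: There exists a unit flow from the origin to infinity on the lattice ℤ³ with finite energy. Precisely, there exists an antisymmetric function θ : ℤ³ × ℤ³ → ℝ (θ(x,y) = −θ(y,x)), vanishing on non-adjacent pairs, satisfying the node law Σ_{y∼x} θ(x,y) = 0 at every vertex x ≠ (0,0,0), with strength Σ_{y∼(0,0,0)} θ((0,0,0),y) = 1, and such that the sum over unordered adjacent pairs {x,y} of θ(x,y)² is finite. -/

import Mathlib

/-!
Transience of `ℤ³` in flow form: there is a unit flow from the origin to
infinity with finite energy.

Vertices are points of `ℤ × ℤ × ℤ`; two vertices are adjacent when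
`|x₁−y₁| + |x₂−y₂| + |x₃−y₃| = 1`.  Since each vertex has exactly the six
neighbours obtained by changing one coordinate by `±1`, the node law
`∑_{y∼x} θ(x,y) = 0` is written as the sum of the six corresponding values.
Each undirected edge appears exactly once in the family indexed by
`(x, d) : (ℤ × ℤ × ℤ) × Fin 3`, namely as the edge from `x` to `x + e_d`; the
energy of `θ` is the sum of `θ(e)²` over this family, and finiteness of the
energy is expressed as summability of this (nonnegative) family.
-/

/-- Adjacency in the lattice `ℤ³`. -/
def ZthreeAdj (x y : ℤ × ℤ × ℤ) : Prop :=
  |x.1 - y.1| + |x.2.1 - y.2.1| + |x.2.2 - y.2.2| = 1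

/-- The neighbour of `x` in the positive direction `d`. -/
def zstep (x : ℤ × ℤ × ℤ) (d : Fin 3) : ℤ × ℤ × ℤ :=
  if d = 0 then (x.1 + 1, x.2.1, x.2.2)
  else if d = 1 then (x.1, x.2.1 + 1, x.2.2)
  else (x.1, x.2.1, x.2.2 + 1)

/-!
Start Pólya's urn with one ball of each of `d` colours and let `xᵢ` be the number of times that
colour `i` has been drawn. After `n` draws the position `x` is uniform among the
`multichoose d n` points of its level, and the probability of crossing each edge defines a unit
flow. The edges leaving `x` split `P(x)` into nonnegative parts, so those leaving level `n` have
energy at most `∑ P(x)² = 1 / multichoose d n = O(n ^ (1 - d))`, which is summable for `d ≥ 3`.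
-/

open Function Module

section EdgeFlow

variable {ι M A : Type*} [Fintype ι] [AddCommGroup M] [DecidableEq M] [AddCommGroup A]

/-- The antisymmetric function on pairs of vertices of the Cayley graph of `M` with generators `e`
that carries the amount `g x i` along the oriented edge from `x` to `x + e i`. -/
def edgeFlow (e : ι → M) (g : M → ι → A) (x y : M) : A :=
  ∑ i, ((if y = x + e i then g x i else 0) - if x = y + e i then g y i else 0)

lemma edgeFlow_antisymm (e : ι → M) (g : M → ι → A) (x y : M) :
    edgeFlow e g x y = -edgeFlow e g y x := by
  simp only [edgeFlow, ← Finset.sum_neg_distrib, neg_sub]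

lemma edgeFlow_eq_zero {e : ι → M} {x y : M} (g : M → ι → A)
    (hxy : ∀ i, y ≠ x + e i ∧ x ≠ y + e i) : edgeFlow e g x y = 0 :=
  Finset.sum_eq_zero fun i _ ↦ by rw [if_neg (hxy i).1, if_neg (hxy i).2, sub_zero]

variable {e : ι → M} (he : Injective e) (hne : ∀ i j, e i + e j ≠ 0)
include he hne

lemma edgeFlow_self_add (g : M → ι → A) (x : M) (i : ι) :
    edgeFlow e g x (x + e i) = g x i := by
  classical
  have hback (j : ι) : x ≠ x + e i + e j := by simpa [add_assoc] using hne i j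
  simp [edgeFlow, hback, he.eq_iff]

lemma edgeFlow_self_sub (g : M → ι → A) (x : M) (i : ι) :
    edgeFlow e g x (x - e i) = -g (x - e i) i := by
  rw [edgeFlow_antisymm, ← edgeFlow_self_add he hne g (x - e i) i, sub_add_cancel]

lemma sum_edgeFlow_self_add_add_self_sub (g : M → ι → A) (x : M) :
    ∑ i, (edgeFlow e g x (x + e i) + edgeFlow e g x (x - e i)) =
      ∑ i, g x i - ∑ i, g (x - e i) i := by
  simp only [edgeFlow_self_add he hne, edgeFlow_self_sub he hne, ← sub_eq_add_neg,
    Finset.sum_sub_distrib]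

end EdgeFlow

section Multichoose

lemma succ_mul_multichoose_succ (d n : ℕ) :
    (n + 1) * d.multichoose (n + 1) = (n + d) * d.multichoose n := by
  obtain _ | d := d
  · cases n <;> simp
  · have h := Nat.add_one_mul_choose_eq (d + n) n
    simp only [Nat.multichoose_eq, Nat.add_right_comm d 1, Nat.add_sub_cancel, ← add_assoc]
    linarith

lemma add_one_sq_le_two_mul_multichoose {d : ℕ} (hd : 3 ≤ d) (n : ℕ) :
    (n + 1) ^ 2 ≤ 2 * d.multichoose n :=
  calc (n + 1) ^ 2 ≤ (n + 2) * (n + 1) := by nlinarith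
    _ = 2 * (n + 2).choose n := by
      rw [Nat.choose_symm_add, Nat.choose_two_right,
        Nat.mul_div_cancel' (Nat.even_mul_pred_self (n + 2)).two_dvd]
      rfl
    _ ≤ 2 * d.multichoose n := by
      rw [Nat.multichoose_eq]
      gcongr
      omega

lemma summable_inv_multichoose {d : ℕ} (hd : 3 ≤ d) :
    Summable fun n ↦ (d.multichoose n : ℝ)⁻¹ := by
  have hsq : Summable fun n : ℕ ↦ 2 * (((n + 1 : ℕ) : ℝ) ^ 2)⁻¹ :=
    ((summable_nat_add_iff 1).2 (Real.summable_nat_pow_inv.2 one_lt_two)).mul_left 2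
  refine hsq.of_nonneg_of_le (fun n ↦ by positivity) fun n ↦ ?_
  have hle : ((n + 1 : ℕ) : ℝ) ^ 2 ≤ 2 * d.multichoose n := by
    exact_mod_cast add_one_sq_le_two_mul_multichoose hd n
  calc (d.multichoose n : ℝ)⁻¹ = 2 * (2 * (d.multichoose n : ℝ))⁻¹ := by
        rw [mul_inv, mul_inv_cancel_left₀ two_ne_zero]
    _ ≤ 2 * (((n + 1 : ℕ) : ℝ) ^ 2)⁻¹ := by gcongr

end Multichoose

lemma summable_comp_iff_summable_ncard_fiber_mul {α β : Type*} {f : α → β} {h : β → ℝ}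
    (hf : ∀ b, (f ⁻¹' {b}).Finite) (hh : 0 ≤ h) :
    Summable (h ∘ f) ↔ Summable fun b ↦ (f ⁻¹' {b}).ncard * h b := by
  have hfiber (b : β) : ∑' a : f ⁻¹' {b}, (h ∘ f) a = (f ⁻¹' {b}).ncard * h b := by
    have hconst (a : f ⁻¹' {b}) : (h ∘ f) a = h b := congrArg h a.2
    simp only [hconst, tsum_const, nsmul_eq_mul, Nat.card_coe_set_eq]
  have hfin (b : β) : Summable fun a : f ⁻¹' {b} ↦ (h ∘ f) a :=
    have := (hf b).to_subtype
    .of_finite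
  have hpartition (a : α) : ∃! b, a ∈ f ⁻¹' {b} := ⟨f a, rfl, fun _ hb ↦ Eq.symm hb⟩
  rw [summable_partition (f := h ∘ f) (fun a ↦ hh (f a)) hpartition]
  simp only [hfin, hfiber, implies_true, true_and]

section Levels

variable {ι : Type*} [Fintype ι]

lemma finite_setOf_sum_eq (n : ℕ) : {x : ι → ℕ | ∑ i, x i = n}.Finite := by
  classical
  exact .of_equiv (Sym ι n) (Sym.equivNatSumOfFintype ι n)

lemma ncard_setOf_sum_eq (n : ℕ) :
    {x : ι → ℕ | ∑ i, x i = n}.ncard = (Fintype.card ι).multichoose n := by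
  classical
  rw [← Sym.card_sym_eq_multichoose, ← Nat.card_eq_fintype_card,
    Nat.card_congr (Sym.equivNatSumOfFintype ι n)]
  rfl

lemma summable_comp_sum_iff_summable_multichoose_mul {h : ℕ → ℝ} (hh : 0 ≤ h) :
    (Summable fun x : ι → ℕ ↦ h (∑ i, x i)) ↔
      Summable fun n ↦ (Fintype.card ι).multichoose n * h n := by
  simp only [← ncard_setOf_sum_eq]
  exact summable_comp_iff_summable_ncard_fiber_mul finite_setOf_sum_eq hh

end Levels

lemma summable_natCast_iff_of_eq_zero {ι A : Type*} [AddCommMonoid A] [TopologicalSpace A]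
    {f : (ι → ℤ) → A} (hf : ∀ x, ¬0 ≤ x → f x = 0) :
    (Summable fun x : ι → ℕ ↦ f fun i ↦ x i) ↔ Summable f := by
  have hinj : Injective fun (x : ι → ℕ) (i : ι) ↦ (x i : ℤ) :=
    fun _ _ h ↦ funext fun i ↦ Int.ofNat_inj.1 (congrFun h i)
  refine hinj.summable_iff fun x hx ↦ hf x fun hnonneg ↦ hx ?_
  exact ⟨fun i ↦ (x i).toNat, funext fun i ↦ Int.toNat_of_nonneg (hnonneg i)⟩

section Urn

variable {ι : Type*} [Fintype ι]

/-- The probability that Pólya's urn, started with one ball of each colour in `ι`, ever reaches the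
state in which each colour `i` has been drawn `x i` times. It is extended by zero to all of
`ι → ℤ`. -/
noncomputable def urnProb (x : ι → ℤ) : ℝ :=
  open Classical in
  if 0 ≤ x then ((Fintype.card ι).multichoose (∑ i, x i).toNat : ℝ)⁻¹ else 0

/-- The probability that Pólya's urn visits the state `x` and draws colour `i` next: at that moment
`x i + 1` of its `∑ j, x j + card ι` balls have colour `i`. -/
noncomputable def urnFlow (x : ι → ℤ) (i : ι) : ℝ :=
  urnProb x * ((x i + 1) / (∑ j, x j + Fintype.card ι))

lemma urnProb_of_nonneg {x : ι → ℤ} {n : ℕ} (hx : 0 ≤ x) (hn : ∑ i, x i = n) :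
    urnProb x = ((Fintype.card ι).multichoose n : ℝ)⁻¹ := by
  rw [urnProb, if_pos hx, hn, Int.toNat_natCast]

lemma urnProb_of_not_nonneg {x : ι → ℤ} (hx : ¬0 ≤ x) : urnProb x = 0 := if_neg hx

lemma urnProb_zero : urnProb (0 : ι → ℤ) = 1 := by
  simp [urnProb_of_nonneg (n := 0) le_rfl]

lemma urnProb_nonneg (x : ι → ℤ) : 0 ≤ urnProb x := by
  unfold urnProb
  positivity

lemma urnFlow_nonneg (x : ι → ℤ) (i : ι) : 0 ≤ urnFlow x i := by
  by_cases hx : 0 ≤ x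
  · have hi : (0 : ℝ) ≤ x i := by exact_mod_cast hx i
    have hsum : (0 : ℝ) ≤ ∑ j, (x j : ℝ) :=
      Finset.sum_nonneg fun j _ ↦ by exact_mod_cast hx j
    have := urnProb_nonneg x
    unfold urnFlow
    push_cast
    positivity
  · simp [urnFlow, urnProb_of_not_nonneg hx]

lemma sum_urnFlow [Nonempty ι] (x : ι → ℤ) : ∑ i, urnFlow x i = urnProb x := by
  by_cases hx : 0 ≤ x
  · have hsum : (0 : ℝ) ≤ ∑ j, (x j : ℝ) :=
      Finset.sum_nonneg fun j _ ↦ by exact_mod_cast hx j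
    have hcard : (0 : ℝ) < Fintype.card ι := by exact_mod_cast Fintype.card_pos
    have htotal : (∑ j, (x j : ℝ)) + Fintype.card ι ≠ 0 :=
      (lt_add_of_nonneg_of_lt hsum hcard).ne'
    simp [urnFlow, ← Finset.mul_sum, ← Finset.sum_div, Finset.sum_add_distrib, div_self htotal]
  · simp [urnFlow, urnProb_of_not_nonneg hx]

lemma urnFlow_le_urnProb (x : ι → ℤ) (i : ι) : urnFlow x i ≤ urnProb x :=
  have : Nonempty ι := ⟨i⟩
  (Finset.single_le_sum (fun j _ ↦ urnFlow_nonneg x j) (Finset.mem_univ i)).trans_eq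
    (sum_urnFlow x)

section Inflow

variable [DecidableEq ι]

lemma urnFlow_sub_single_of_not_nonneg {x : ι → ℤ} (hx : ¬0 ≤ x) (i : ι) :
    urnFlow (x - Pi.single i 1) i = 0 := by
  have hle : x - Pi.single i 1 ≤ x := sub_le_self x (Pi.single_nonneg.2 zero_le_one)
  rw [urnFlow, urnProb_of_not_nonneg fun h ↦ hx (h.trans hle), zero_mul]

lemma urnFlow_sub_single_of_nonneg {x : ι → ℤ} {n : ℕ} (hx : 0 ≤ x) (hn : ∑ j, x j = n + 1)
    (i : ι) :
    urnFlow (x - Pi.single i 1) i =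
      ((Fintype.card ι).multichoose n : ℝ)⁻¹ * (x i / (n + Fintype.card ι)) := by
  have hsum : ∑ j, (x - Pi.single i 1 : ι → ℤ) j = n := by simp [hn]
  rw [urnFlow, hsum]
  obtain hi | hi := (hx i).eq_or_lt
  · simp [← hi]
  · have hnonneg : 0 ≤ x - Pi.single i (1 : ℤ) := by
      intro j
      obtain rfl | hj := eq_or_ne j i
      · simpa using Int.add_one_le_iff.2 hi
      · simpa [hj] using hx j
    simp [urnProb_of_nonneg hnonneg hsum]

lemma sum_urnFlow_sub_single_zero :
    ∑ i, urnFlow ((0 : ι → ℤ) - Pi.single i 1) i = 0 := by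
  refine Finset.sum_eq_zero fun i _ ↦ ?_
  have hneg : ¬0 ≤ (0 : ι → ℤ) - Pi.single i 1 := fun h ↦ by simpa using h i
  rw [urnFlow, urnProb_of_not_nonneg hneg, zero_mul]

lemma sum_urnFlow_sub_single {x : ι → ℤ} (hx : x ≠ 0) :
    ∑ i, urnFlow (x - Pi.single i 1) i = urnProb x := by
  by_cases hx₀ : 0 ≤ x
  swap
  · simp [urnFlow_sub_single_of_not_nonneg hx₀, urnProb_of_not_nonneg hx₀]
  obtain ⟨n, hn⟩ : ∃ n : ℕ, ∑ j, x j = n + 1 := by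
    have hpos : 0 < ∑ j, x j := Fintype.sum_pos (hx₀.lt_of_ne' hx)
    exact ⟨(∑ j, x j - 1).toNat, by omega⟩
  have hnℝ : ∑ j, (x j : ℝ) = n + 1 := by exact_mod_cast hn
  have hrec : ((n : ℝ) + 1) * (Fintype.card ι).multichoose (n + 1) =
      (n + Fintype.card ι) * (Fintype.card ι).multichoose n := by
    exact_mod_cast succ_mul_multichoose_succ (Fintype.card ι) n
  calc ∑ i, urnFlow (x - Pi.single i 1) i
      = ((Fintype.card ι).multichoose n : ℝ)⁻¹ * ((n + 1) / (n + Fintype.card ι)) := by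
        simp only [urnFlow_sub_single_of_nonneg hx₀ hn, ← Finset.mul_sum, ← Finset.sum_div, hnℝ]
    _ = (n + 1) / ((n + 1) * (Fintype.card ι).multichoose (n + 1)) := by
        rw [hrec, div_mul_eq_div_div_swap, inv_mul_eq_div, div_right_comm]
    _ = ((Fintype.card ι).multichoose (n + 1) : ℝ)⁻¹ := by
        rw [div_mul_cancel_left₀ (by positivity)]
    _ = urnProb x := (urnProb_of_nonneg hx₀ (mod_cast hn)).symm

end Inflow

section Energy

variable (hι : 3 ≤ Fintype.card ι)
include hι

lemma summable_urnProb_sq : Summable fun x : ι → ℤ ↦ urnProb x ^ 2 := by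
  have hlevel (x : ι → ℕ) : urnProb (fun i ↦ (x i : ℤ)) =
      ((Fintype.card ι).multichoose (∑ i, x i) : ℝ)⁻¹ :=
    urnProb_of_nonneg (fun i ↦ Int.natCast_nonneg _) (Nat.cast_sum _ _).symm
  rw [← summable_natCast_iff_of_eq_zero fun x hx ↦ by simp [urnProb_of_not_nonneg hx]]
  simp only [hlevel]
  rw [summable_comp_sum_iff_summable_multichoose_mul
    (h := fun n ↦ ((Fintype.card ι).multichoose n : ℝ)⁻¹ ^ 2) fun n ↦ sq_nonneg _]
  refine (summable_inv_multichoose hι).congr fun n ↦ ?_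
  simpa only [sq, inv_inv, mul_comm] using
    (mul_self_mul_inv ((Fintype.card ι).multichoose n : ℝ)⁻¹).symm

lemma summable_urnFlow_sq : Summable fun p : (ι → ℤ) × ι ↦ urnFlow p.1 p.2 ^ 2 := by
  have hprob : Summable fun p : (ι → ℤ) × ι ↦ urnProb p.1 ^ 2 * 1 :=
    (summable_urnProb_sq hι).mul_of_nonneg (g := fun _ : ι ↦ (1 : ℝ)) .of_finite
      (fun _ ↦ sq_nonneg _) fun _ ↦ zero_le_one
  refine hprob.of_nonneg_of_le (fun _ ↦ sq_nonneg _) fun p ↦ ?_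
  rw [mul_one]
  exact pow_le_pow_left₀ (urnFlow_nonneg _ _) (urnFlow_le_urnProb _ _) 2

end Energy

end Urn

section Basis

variable {ι R M : Type*} [Ring R] [AddCommGroup M] [Module R M] (b : Basis ι R M)

lemma basis_add_basis_ne_zero [CharZero R] (i j : ι) : b i + b j ≠ 0 := fun h ↦ by
  have hi : 1 + Finsupp.single j (1 : R) i = 0 := by
    simpa using congrArg (fun v ↦ b.repr v i) h
  obtain rfl | hij := eq_or_ne i j
  · simp [one_add_one_eq_two] at hi
  · simp [hij] at hi

lemma equivFun_sub_basis [Finite ι] [DecidableEq ι] (x : M) (i : ι) :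
    b.equivFun (x - b i) = b.equivFun x - Pi.single i 1 := by
  ext j
  simp [Pi.single_apply, Finsupp.single_apply, eq_comm]

end Basis

theorem z3_exists_unit_flow_finite_energy_general {ι M : Type*} [Fintype ι] [AddCommGroup M]
    (b : Basis ι ℤ M) (hι : 3 ≤ Fintype.card ι) :
    ∃ θ : M → M → ℝ,
      (∀ x y, θ x y = -θ y x) ∧
      (∀ x y, (∀ i, y ≠ x + b i ∧ x ≠ y + b i) → θ x y = 0) ∧
      (∀ x ≠ 0, ∑ i, (θ x (x + b i) + θ x (x - b i)) = 0) ∧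
      ∑ i, (θ 0 (b i) + θ 0 (-b i)) = 1 ∧
      Summable fun p : M × ι ↦ θ p.1 (p.1 + b p.2) ^ 2 := by
  classical
  have : Nonempty ι := Fintype.card_pos_iff.1 (by omega)
  have hb := b.injective
  have hbne := basis_add_basis_ne_zero b
  let g (x : M) (i : ι) : ℝ := urnFlow (b.equivFun x) i
  refine ⟨edgeFlow b g, edgeFlow_antisymm b g, fun x y ↦ edgeFlow_eq_zero g, fun x hx ↦ ?_, ?_, ?_⟩
  · have hx' : b.equivFun x ≠ 0 := b.equivFun.map_ne_zero_iff.2 hx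
    rw [sum_edgeFlow_self_add_add_self_sub hb hbne]
    simp only [g, equivFun_sub_basis, sum_urnFlow, sum_urnFlow_sub_single hx', sub_self]
  · have hdiv := sum_edgeFlow_self_add_add_self_sub hb hbne g 0
    simp only [g, equivFun_sub_basis, map_zero, sum_urnFlow, sum_urnFlow_sub_single_zero,
      urnProb_zero, sub_zero] at hdiv
    simpa only [zero_add, zero_sub] using hdiv
  · simp only [edgeFlow_self_add hb hbne]
    exact (b.equivFun.toEquiv.prodCongr (.refl ι)).summable_iff.2 (summable_urnFlow_sq hι)

section Zthree

/-- The standard basis of `ℤ × ℤ × ℤ`, indexed so that `zstep x d = x + zthreeBasis d`. -/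
noncomputable def zthreeBasis : Basis (Fin 3) ℤ (ℤ × ℤ × ℤ) :=
  .ofEquivFun
    { toFun := fun x ↦ ![x.1, x.2.1, x.2.2]
      invFun := fun v ↦ (v 0, v 1, v 2)
      map_add' := fun x y ↦ by simp
      map_smul' := fun c x ↦ by simp
      left_inv := fun _ ↦ rfl
      right_inv := fun v ↦ by ext i; fin_cases i <;> rfl }

lemma zthreeBasis_apply (d : Fin 3) :
    zthreeBasis d = ![(1, 0, 0), (0, 1, 0), (0, 0, 1)] d := by
  refine (congrFun (Basis.coe_ofEquivFun _) d).trans ?_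
  fin_cases d <;> rfl

lemma zstep_eq_add_zthreeBasis (x : ℤ × ℤ × ℤ) (d : Fin 3) : zstep x d = x + zthreeBasis d := by
  fin_cases d <;> simp [zstep, zthreeBasis_apply, Prod.ext_iff]

lemma zthreeAdj_comm {x y : ℤ × ℤ × ℤ} : ZthreeAdj x y ↔ ZthreeAdj y x := by
  simp only [ZthreeAdj, abs_sub_comm]

lemma zthreeAdj_add_zthreeBasis (x : ℤ × ℤ × ℤ) (d : Fin 3) : ZthreeAdj x (x + zthreeBasis d) := by
  fin_cases d <;> simp [ZthreeAdj, zthreeBasis_apply]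

lemma ne_add_zthreeBasis_of_not_zthreeAdj {x y : ℤ × ℤ × ℤ} (hxy : ¬ZthreeAdj x y) (d : Fin 3) :
    y ≠ x + zthreeBasis d ∧ x ≠ y + zthreeBasis d := by
  constructor <;> rintro rfl
  · exact hxy (zthreeAdj_add_zthreeBasis x d)
  · exact hxy (zthreeAdj_comm.1 (zthreeAdj_add_zthreeBasis y d))

lemma sum_add_zthreeBasis_add_sub_zthreeBasis {A : Type*} [AddCommMonoid A]
    (f : ℤ × ℤ × ℤ → A) (x : ℤ × ℤ × ℤ) :
    ∑ d, (f (x + zthreeBasis d) + f (x - zthreeBasis d)) =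
      f (x.1 + 1, x.2.1, x.2.2) + f (x.1 - 1, x.2.1, x.2.2) +
        f (x.1, x.2.1 + 1, x.2.2) + f (x.1, x.2.1 - 1, x.2.2) +
        f (x.1, x.2.1, x.2.2 + 1) + f (x.1, x.2.1, x.2.2 - 1) := by
  obtain ⟨a, b, c⟩ := x
  simp [Fin.sum_univ_three, zthreeBasis_apply, add_assoc]

end Zthree

/-- **Transience of `ℤ³`**: there exists a unit flow from the origin to
infinity on `ℤ³` with finite energy. -/
theorem z3_exists_unit_flow_finite_energy :
    ∃ θ : ℤ × ℤ × ℤ → ℤ × ℤ × ℤ → ℝ,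
      (∀ x y, θ x y = -θ y x) ∧
      (∀ x y, ¬ZthreeAdj x y → θ x y = 0) ∧
      (∀ x : ℤ × ℤ × ℤ, x ≠ (0, 0, 0) →
        θ x (x.1 + 1, x.2.1, x.2.2) + θ x (x.1 - 1, x.2.1, x.2.2) +
          θ x (x.1, x.2.1 + 1, x.2.2) + θ x (x.1, x.2.1 - 1, x.2.2) +
          θ x (x.1, x.2.1, x.2.2 + 1) + θ x (x.1, x.2.1, x.2.2 - 1) = 0) ∧
      (θ (0, 0, 0) (1, 0, 0) + θ (0, 0, 0) (-1, 0, 0) +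
        θ (0, 0, 0) (0, 1, 0) + θ (0, 0, 0) (0, -1, 0) +
        θ (0, 0, 0) (0, 0, 1) + θ (0, 0, 0) (0, 0, -1) = 1) ∧
      Summable (fun p : (ℤ × ℤ × ℤ) × Fin 3 => θ p.1 (zstep p.1 p.2) ^ 2) := by
  obtain ⟨θ, hanti, hadj, hnode, hunit, henergy⟩ :=
    z3_exists_unit_flow_finite_energy_general zthreeBasis (by simp)
  refine ⟨θ, hanti, fun x y h ↦ hadj x y (ne_add_zthreeBasis_of_not_zthreeAdj h),
    fun x hx ↦ (sum_add_zthreeBasis_add_sub_zthreeBasis (θ x) x).symm.trans (hnode x hx), ?_, ?_⟩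
  · simpa [Fin.sum_univ_three, zthreeBasis_apply, Prod.zero_eq_mk, add_assoc] using hunit
  · simpa only [zstep_eq_add_zthreeBasis] using henergy
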